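/- Every sequence generated by the inexact augmented Lagrangian method is a valid sequence of the inexact proximal point algorithm on the negative dual function: if (x^{k+1}, y^{k+1}, s^{k+1}, λ^{k+1})_{k∈ℕ} is an IALM sequence for the constrained problem with penalty parameters (γ_k) and errors (ε_k), then for every k, ‖λ^{k+1} − prox_{γ_k h}(λ^k)‖ ≤ ε_{k+1}, where prox_{γ h}(λ) is the unique minimizer of μ ↦ h(μ) + ‖λ − μ‖²/(2γ) and h is the negative dual function; moreover s^{k+1} = (λ^k − λ^{k+1})/γ_k. -/

import Mathlib

open scoped RealInnerProductSpace
open Filter Asymptotics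

noncomputable section

/-- The negative dual function `h(l) = sup_{(x,s) ∈ 𝒞} (⟪l, s⟫ − f x)`. -/
def negDual {E Y : Type*} [NormedAddCommGroup Y] [InnerProductSpace ℝ Y]
    (f : E → EReal) (CC : Set (E × Y)) (l : Y) : EReal :=
  ⨆ (p : E × Y) (_ : p ∈ CC), ((⟪l, p.2⟫ : ℝ) : EReal) - f p.1

/-- The value function of the shifted problem: `ν(s̃) = inf { f x | (x, s̃) ∈ 𝒞 }`. -/
def valueFn {E Y : Type*} (f : E → EReal) (CC : Set (E × Y)) (st : Y) : EReal :=
  ⨅ (x : E) (_ : (x, st) ∈ CC), f x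
/-- Strong duality for the quadratically regularised problem. -/
theorem exists_dual_point {Y : Type*} [NormedAddCommGroup Y] [InnerProductSpace ℝ Y]
    [CompleteSpace Y] (A : Set (Y × ℝ)) (hA : Convex ℝ A) (l : Y) (g : ℝ) (hg : 0 < g) (m : ℝ)
    (hlow : ∀ s r, (s, r) ∈ A → m ≤ r - ⟪l, s⟫ + g / 2 * ‖s‖ ^ 2)
    (happ : ∀ d : ℝ, 0 < d → ∃ s r, (s, r) ∈ A ∧ r - ⟪l, s⟫ + g / 2 * ‖s‖ ^ 2 < m + d) :
    ∃ μ : Y, ∀ s r, (s, r) ∈ A → ⟪μ, s⟫ - r + ‖l - μ‖ ^ 2 / (2 * g) ≤ -m := by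
  have hd : ∀ n : ℕ, (0 : ℝ) < 1 / ((n : ℝ) + 1) := fun n => Nat.one_div_pos_of_nat
  choose s r hsr hlt using fun n : ℕ => happ _ (hd n)
  have hcau : CauchySeq s := by
    apply cauchySeq_of_le_tendsto_0 (fun n : ℕ => Real.sqrt (8 / g * (1 / ((n : ℝ) + 1))))
    · intro n k N hn hk
      rw [dist_eq_norm]
      apply Real.le_sqrt_of_sq_le
      have hmid := hA (hsr n) (hsr k) (show (0 : ℝ) ≤ 1 / 2 by norm_num)
        (show (0 : ℝ) ≤ 1 / 2 by norm_num) (by norm_num)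
      have h1 := hlow _ _ hmid
      change m ≤ ((1 / 2 : ℝ) * r n + (1 / 2 : ℝ) * r k)
        - ⟪l, (1 / 2 : ℝ) • s n + (1 / 2 : ℝ) • s k⟫
        + g / 2 * ‖(1 / 2 : ℝ) • s n + (1 / 2 : ℝ) • s k‖ ^ 2 at h1
      have e1 : ⟪l, (1 / 2 : ℝ) • s n + (1 / 2 : ℝ) • s k⟫ = 1 / 2 * ⟪l, s n⟫ + 1 / 2 * ⟪l, s k⟫ := by
        rw [inner_add_right, inner_smul_right, inner_smul_right]
      have e2 : ‖(1 / 2 : ℝ) • s n + (1 / 2 : ℝ) • s k‖ ^ 2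
          = (‖s n‖ ^ 2 + ‖s k‖ ^ 2) / 2 - ‖s n - s k‖ ^ 2 / 4 := by
        rw [← smul_add, norm_smul, mul_pow, @norm_add_sq_real, @norm_sub_sq_real]
        norm_num
        ring
      rw [e1, e2] at h1
      have h2 := hlt n
      have h3 := hlt k
      have h4 : 1 / ((n : ℝ) + 1) ≤ 1 / ((N : ℝ) + 1) := Nat.one_div_le_one_div hn
      have h5 : 1 / ((k : ℝ) + 1) ≤ 1 / ((N : ℝ) + 1) := Nat.one_div_le_one_div hk
      have h6 : g / 8 * ‖s n - s k‖ ^ 2 ≤ 1 / ((N : ℝ) + 1) := by linarith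
      have h7 : ‖s n - s k‖ ^ 2 = 8 / g * (g / 8 * ‖s n - s k‖ ^ 2) := by field_simp
      rw [h7]
      exact mul_le_mul_of_nonneg_left h6 (by positivity)
    · have h := (tendsto_one_div_add_atTop_nhds_zero_nat (𝕜 := ℝ)).const_mul (8 / g)
      have h' := (Real.continuous_sqrt.tendsto _).comp h
      simpa [Function.comp_def] using h'
  obtain ⟨z, hz⟩ := cauchySeq_tendsto_of_complete hcau
  have hPhi : Tendsto (fun n => r n - ⟪l, s n⟫ + g / 2 * ‖s n‖ ^ 2) atTop (nhds m) := by
    apply tendsto_of_tendsto_of_tendsto_of_le_of_le tendsto_const_nhds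
      (h := fun n : ℕ => m + 1 / ((n : ℝ) + 1))
    · simpa using (tendsto_one_div_add_atTop_nhds_zero_nat (𝕜 := ℝ)).const_add m
    · exact fun n => hlow _ _ (hsr n)
    · exact fun n => (hlt n).le
  have hin : Tendsto (fun n => ⟪l, s n⟫) atTop (nhds ⟪l, z⟫) := tendsto_const_nhds.inner hz
  have hno : Tendsto (fun n => g / 2 * ‖s n‖ ^ 2) atTop (nhds (g / 2 * ‖z‖ ^ 2)) :=
    (hz.norm.pow 2).const_mul _
  obtain ⟨R, hR⟩ : ∃ R, R = m + ⟪l, z⟫ - g / 2 * ‖z‖ ^ 2 := ⟨_, rfl⟩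
  have hr : Tendsto r atTop (nhds R) := by
    rw [hR]
    have := (hPhi.add hin).sub hno
    refine this.congr fun n => ?_
    ring
  refine ⟨l - g • z, fun v q hvq => ?_⟩
  have key : ∀ t : ℝ, 0 < t → t < 1 →
      0 ≤ (q - R - ⟪l, v - z⟫ + g * ⟪z, v - z⟫) + t * (g / 2 * ‖v - z‖ ^ 2) := by
    intro t ht0 ht1
    have hlim : m ≤ ((1 - t) * R + t * q) - ⟪l, (1 - t) • z + t • v⟫
        + g / 2 * ‖(1 - t) • z + t • v‖ ^ 2 := by
      have hcomb : Tendsto (fun n => (1 - t) • s n + t • v) atTop (nhds ((1 - t) • z + t • v)) :=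
        (hz.const_smul _).add_const _
      have T : Tendsto (fun n => ((1 - t) * r n + t * q) - ⟪l, (1 - t) • s n + t • v⟫
        + g / 2 * ‖(1 - t) • s n + t • v‖ ^ 2) atTop (nhds (((1 - t) * R + t * q)
        - ⟪l, (1 - t) • z + t • v⟫ + g / 2 * ‖(1 - t) • z + t • v‖ ^ 2)) :=
        (((hr.const_mul _).add_const _).sub (tendsto_const_nhds.inner hcomb)).add
          ((hcomb.norm.pow 2).const_mul _)
      refine ge_of_tendsto' T fun n => ?_
      exact hlow _ _ (hA (hsr n) hvq (by linarith) ht0.le (by ring))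
    have ez : (1 - t) • z + t • v = z + t • (v - z) := by module
    rw [ez, @norm_add_sq_real, inner_add_right, inner_smul_right, inner_smul_right, norm_smul,
      mul_pow, Real.norm_eq_abs, sq_abs] at hlim
    have : 0 ≤ t * ((q - R - ⟪l, v - z⟫ + g * ⟪z, v - z⟫) + t * (g / 2 * ‖v - z‖ ^ 2)) := by
      rw [show m = R - ⟪l, z⟫ + g / 2 * ‖z‖ ^ 2 by rw [hR]; ring] at hlim
      nlinarith [hlim]
    exact nonneg_of_mul_nonneg_right this ht0
  have hfin : 0 ≤ q - R - ⟪l, v - z⟫ + g * ⟪z, v - z⟫ := by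
    have T : Tendsto (fun n : ℕ => (q - R - ⟪l, v - z⟫ + g * ⟪z, v - z⟫)
        + (1 / ((n : ℝ) + 1)) * (g / 2 * ‖v - z‖ ^ 2)) atTop
        (nhds ((q - R - ⟪l, v - z⟫ + g * ⟪z, v - z⟫) + 0 * (g / 2 * ‖v - z‖ ^ 2))) :=
      ((tendsto_one_div_add_atTop_nhds_zero_nat (𝕜 := ℝ)).mul_const _).const_add _
    rw [zero_mul, add_zero] at T
    refine ge_of_tendsto T ?_
    filter_upwards [eventually_gt_atTop 0] with n hn
    apply key _ (hd n)
    rw [div_lt_one (by positivity)]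
    have : (0 : ℝ) < n := by exact_mod_cast hn
    linarith
  have e3 : ‖l - (l - g • z)‖ ^ 2 / (2 * g) = g / 2 * ‖z‖ ^ 2 := by
    rw [sub_sub_cancel, norm_smul, mul_pow, Real.norm_eq_abs, sq_abs]
    field_simp
  rw [e3, inner_sub_left, real_inner_smul_left]
  rw [inner_sub_right, inner_sub_right, real_inner_self_eq_norm_sq, hR] at hfin
  linarith

theorem statement1
    {E Y : Type*}
    [NormedAddCommGroup E] [InnerProductSpace ℝ E] [CompleteSpace E]
    [NormedAddCommGroup Y] [InnerProductSpace ℝ Y] [CompleteSpace Y]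
    (X : Set E) (hXne : X.Nonempty) (hXcl : IsClosed X) (hXcv : Convex ℝ X)
    (K : Set Y) (hKne : K.Nonempty) (hKcl : IsClosed K) (hKcv : Convex ℝ K)
    (f : E → EReal)
    (hf_bot : ∀ x : E, f x ≠ ⊥) (hf_top : ∃ x ∈ X, f x ≠ ⊤)
    (hf_dom : ∀ x : E, x ∉ X → f x = ⊤)
    (hf_lsc : LowerSemicontinuous f)
    (hf_cvx : ∀ x y : E, ∀ a b : ℝ, 0 ≤ a → 0 ≤ b → a + b = 1 →
      f (a • x + b • y) ≤ (a : EReal) * f x + (b : EReal) * f y)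
    (C : E → Y) (CC : Set (E × Y))
    (hCC : ∀ (x : E) (sv : Y), (x, sv) ∈ CC ↔ x ∈ X ∧ ∃ yv ∈ K, sv = C x - yv)
    (hCCne : CC.Nonempty) (hCCcl : IsClosed CC) (hCCcv : Convex ℝ CC)
    (hnu_bot : ∀ sv : Y, valueFn f CC sv ≠ ⊥)
    (γ : ℕ → ℝ) (hγ : ∀ k : ℕ, 0 < γ k) (ε : ℕ → ℝ) (hε : ∀ k : ℕ, 0 ≤ ε k)
    (xs : ℕ → E) (ys : ℕ → Y) (ss : ℕ → Y) (lam : ℕ → Y)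
    (hxs : ∀ k : ℕ, xs (k+1) ∈ X) (hys : ∀ k : ℕ, ys (k+1) ∈ K)
    (hss : ∀ k : ℕ, ss (k+1) = C (xs (k+1)) - ys (k+1))
    (hopt : ∀ k : ℕ,
      f (xs (k+1)) - ((⟪lam k, ss (k+1)⟫ : ℝ) : EReal)
          + ((γ k / 2 * ‖ss (k+1)‖ ^ 2 : ℝ) : EReal)
        ≤ (⨅ (p : E × Y) (_ : p ∈ CC),
              f p.1 - ((⟪lam k, p.2⟫ : ℝ) : EReal)
                + ((γ k / 2 * ‖p.2‖ ^ 2 : ℝ) : EReal))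
          + ((ε (k+1) ^ 2 / (2 * γ k) : ℝ) : EReal))
    (hlam : ∀ k : ℕ, lam (k+1) = lam k - γ k • ss (k+1))
    :
    ∀ k : ℕ,
      (∀ q : Y,
          (∀ μ : Y,
              negDual f CC q + ((‖lam k - q‖ ^ 2 / (2 * γ k) : ℝ) : EReal)
                ≤ negDual f CC μ + ((‖lam k - μ‖ ^ 2 / (2 * γ k) : ℝ) : EReal)) →
          ‖lam (k+1) - q‖ ≤ ε (k+1)) ∧
      ss (k+1) = (γ k)⁻¹ • (lam k - lam (k+1)) := by
  intro k
  have hgk := hγ k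
  refine ⟨fun q hq => ?_, ?_⟩
  swap
  · rw [hlam k, sub_sub_cancel, smul_smul, inv_mul_cancel₀ hgk.ne', one_smul]
  have hreal : ∀ x, f x ≠ ⊤ → f x = ((f x).toReal : EReal) := fun x hx =>
    (EReal.coe_toReal hx (hf_bot x)).symm
  have hmem : (xs (k+1), ss (k+1)) ∈ CC := (hCC _ _).2 ⟨hxs k, _, hys k, hss k⟩
  have ho := hopt k
  obtain ⟨I, hI⟩ : ∃ I, I = (⨅ (p : E × Y) (_ : p ∈ CC),
              f p.1 - ((⟪lam k, p.2⟫ : ℝ) : EReal)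
                + ((γ k / 2 * ‖p.2‖ ^ 2 : ℝ) : EReal)) := ⟨_, rfl⟩
  rw [← hI] at ho
  have hIle : ∀ p ∈ CC, I ≤ f p.1 - ((⟪lam k, p.2⟫ : ℝ) : EReal)
                + ((γ k / 2 * ‖p.2‖ ^ 2 : ℝ) : EReal) := fun p hp => by
    rw [hI]; exact iInf₂_le p hp
  have hItop : I ≠ ⊤ := by
    obtain ⟨x0, hx0, hfx0⟩ := hf_top
    obtain ⟨y0, hy0⟩ := hKne
    have h := hIle (x0, C x0 - y0) ((hCC _ _).2 ⟨hx0, y0, hy0, rfl⟩)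
    intro hI'
    rw [hI'] at h
    simp only at h
    rw [hreal x0 hfx0] at h
    norm_cast at h
  have hfx : f (xs (k+1)) ≠ ⊤ := by
    intro h
    rw [h, EReal.top_sub_coe, EReal.top_add_coe, top_le_iff] at ho
    induction I with
    | bot => simp at ho
    | top => exact hItop rfl
    | coe a =>
      rw [← EReal.coe_add] at ho
      exact EReal.coe_ne_top _ ho
  have hIbot : I ≠ ⊥ := by
    intro h
    rw [h, EReal.bot_add, hreal _ hfx] at ho
    norm_cast at ho
  lift I to ℝ using ⟨hItop, hIbot⟩
  obtain ⟨fx, hfxe⟩ : ∃ a : ℝ, f (xs (k+1)) = a := ⟨_, hreal _ hfx⟩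
  rw [hfxe] at ho
  norm_cast at ho
  let A : Set (Y × ℝ) := {a | ∃ x, (x, a.1) ∈ CC ∧ f x ≤ (a.2 : EReal)}
  have hA : Convex ℝ A := by
    rintro ⟨s1, r1⟩ ⟨x1, h1, h1'⟩ ⟨s2, r2⟩ ⟨x2, h2, h2'⟩ a b ha hb hab
    refine ⟨a • x1 + b • x2, hCCcv h1 h2 ha hb hab, (hf_cvx x1 x2 a b ha hb hab).trans ?_⟩
    simp only at h1' h2'
    have ht1 := hreal x1 (ne_top_of_le_ne_top (EReal.coe_ne_top _) h1')
    rw [ht1] at h1' ⊢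
    have ht2 := hreal x2 (ne_top_of_le_ne_top (EReal.coe_ne_top _) h2')
    rw [ht2] at h2' ⊢
    have h1'' := EReal.coe_le_coe_iff.1 h1'
    have h2'' := EReal.coe_le_coe_iff.1 h2'
    rw [← EReal.coe_mul, ← EReal.coe_mul, ← EReal.coe_add, EReal.coe_le_coe_iff]
    exact add_le_add (mul_le_mul_of_nonneg_left h1'' ha) (mul_le_mul_of_nonneg_left h2'' hb)
  obtain ⟨μ, hμ⟩ := exists_dual_point A hA (lam k) (γ k) hgk I (by
      rintro s r ⟨x, hx, hxr⟩
      simp only at hx hxr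
      have h := hIle _ hx
      simp only at h
      have ht := hreal x (ne_top_of_le_ne_top (EReal.coe_ne_top _) hxr)
      rw [ht] at hxr h
      norm_cast at h hxr
      linarith) (by
      intro d hd
      have hlt : (⨅ (p : E × Y) (_ : p ∈ CC),
              f p.1 - ((⟪lam k, p.2⟫ : ℝ) : EReal)
                + ((γ k / 2 * ‖p.2‖ ^ 2 : ℝ) : EReal)) < ((I + d : ℝ) : EReal) := by
        rw [← hI]; exact_mod_cast (by linarith : I < I + d)
      simp only [iInf_lt_iff] at hlt
      obtain ⟨p, hp, hlt⟩ := hlt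
      have hpt : f p.1 ≠ ⊤ := by
        intro h
        rw [h, EReal.top_sub_coe, EReal.top_add_coe] at hlt
        exact not_top_lt hlt
      refine ⟨p.2, (f p.1).toReal, ⟨p.1, hp, (hreal _ hpt).le⟩, ?_⟩
      rw [hreal _ hpt] at hlt
      exact_mod_cast hlt)
  have hdual : negDual f CC μ ≤ ((-I - ‖lam k - μ‖ ^ 2 / (2 * γ k) : ℝ) : EReal) := by
    refine iSup₂_le fun p hp => ?_
    by_cases hpt : f p.1 = ⊤
    · rw [hpt]; simp
    · have h := hμ p.2 (f p.1).toReal ⟨p.1, hp, (hreal _ hpt).le⟩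
      rw [hreal _ hpt]
      norm_cast
      linarith
  have hprim : ((⟪q, ss (k+1)⟫ - fx : ℝ) : EReal) ≤ negDual f CC q := by
    have : ((⟪q, ss (k+1)⟫ : ℝ) : EReal) - f (xs (k+1)) ≤ negDual f CC q :=
      le_iSup₂ (f := fun (p : E × Y) (_ : p ∈ CC) => ((⟪q, p.2⟫ : ℝ) : EReal) - f p.1) _ hmem
    rw [hfxe] at this
    exact_mod_cast this
  have hchain := ((add_le_add_left hprim _).trans (hq μ)).trans (add_le_add_left hdual _)
  norm_cast at hchain
  have e : ‖lam (k+1) - q‖ ^ 2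
      = ‖lam k - q‖ ^ 2 - 2 * γ k * (⟪lam k, ss (k+1)⟫ - ⟪q, ss (k+1)⟫)
        + γ k ^ 2 * ‖ss (k+1)‖ ^ 2 := by
    rw [hlam k, sub_right_comm, @norm_sub_sq_real, inner_smul_right, norm_smul, mul_pow,
      Real.norm_eq_abs, sq_abs, inner_sub_left]
    ring
  have hfin : ‖lam (k+1) - q‖ ^ 2 / (2 * γ k) ≤ ε (k+1) ^ 2 / (2 * γ k) := by
    have e' : ‖lam (k+1) - q‖ ^ 2 / (2 * γ k) = ‖lam k - q‖ ^ 2 / (2 * γ k)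
        - (⟪lam k, ss (k+1)⟫ - ⟪q, ss (k+1)⟫) + γ k / 2 * ‖ss (k+1)‖ ^ 2 := by
      rw [e]; field_simp
    rw [e']
    linarith
  have hsq := (div_le_div_iff_of_pos_right (by positivity : 0 < 2 * γ k)).1 hfin
  exact (sq_le_sq₀ (norm_nonneg _) (hε _)).1 hsq
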